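/- arXiv:2509.13565 — 12 statements merged into one kernel-verified Lean document; each statement's English description precedes it below -/
import Mathlib

section
/- For every cooperative game (P, ν) and every player p ∈ P, the subset formula for the Shapley value coincides with the permutation formula: Shapley(p, ν) = (1/|P|!) · Σ_{σ} (ν(Pred_σ(p) ∪ {p}) − ν(Pred_σ(p))), where the sum ranges over all linear orders (permutations) σ of P and Pred_σ(p) denotes the set of players preceding p in σ. -/
/-!
Group the permutations `σ` by the set `C` of predecessors of `p`. The set `C` never contains `p`,
so it suffices that each `C ⊆ P ∖ {p}` arises from exactly `|C|! (|P| - |C| - 1)!` permutations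
(`card_equiv_pred_eq`). Indeed `C` is the predecessor set of `p` exactly when `σ` carries the
three-block colouring "in `C`", "equal to `p`", "neither" of `P` to the colouring "less than `|C|`",
"equal to `|C|`", "greater than `|C|`" of the positions, and bijections compatible with two
colourings having equal block sizes are counted by the product of the factorials of these sizes
(`card_equiv_comp_eq`).
-/

open Finset

/-- The Shapley value of player `p` in the cooperative game with player set `P`
and utility function `ν`, via the subset formula. -/
noncomputable def shapley {α : Type*} [DecidableEq α] (P : Finset α) (ν : Finset α → ℝ)
    (p : α) : ℝ :=
  ∑ C ∈ (P.erase p).powerset,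
    (((C.card.factorial * (P.card - C.card - 1).factorial : ℕ) : ℝ) / (P.card.factorial : ℝ)) *
      (ν (insert p C) - ν C)

/-- If the colourings `f` and `g` have colour classes of equal sizes, the colour-preserving
bijections form a torsor under the stabilizer of `f` in `Perm α`, whence their number. -/
lemma card_equiv_comp_eq {α β ι : Type*} [Fintype α] [DecidableEq α] [Fintype β] [DecidableEq β]
    [Fintype ι] [DecidableEq ι] (f : α → ι) (g : β → ι)
    (h : ∀ i, Fintype.card {a // f a = i} = Fintype.card {b // g b = i}) :
    Fintype.card {σ : α ≃ β // g ∘ σ = f} =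
      ∏ i, (Fintype.card {a // f a = i}).factorial := by
  let σ₀ : α ≃ β := Equiv.ofFiberEquiv fun i => Fintype.equivOfCardEq (h i)
  have h₀ : ∀ a, g (σ₀ a) = f a := fun a => Equiv.ofFiberEquiv_map _ a
  rw [← DomMulAct.stabilizer_card f]
  refine Fintype.card_congr ((Equiv.equivCongr (Equiv.refl α) σ₀.symm).subtypeEquiv fun σ => ?_)
  have : ∀ a, f (σ₀.symm (σ a)) = g (σ a) := fun a => by
    rw [← h₀, Equiv.apply_symm_apply]
  simp [funext_iff, this]

/-- The number of enumerations of `α` in which the predecessors of `p` form the set `C`. -/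
lemma card_equiv_pred_eq {α : Type*} [Fintype α] [DecidableEq α] (p : α) (C : Finset α)
    (hp : p ∉ C) :
    #{σ : α ≃ Fin (Fintype.card α) | (univ.filter fun q => σ q < σ p) = C} =
      (#C).factorial * (Fintype.card α - #C - 1).factorial := by
  have hlt : #C < Fintype.card α := Finset.card_lt_univ_of_notMem hp
  let k : Fin (Fintype.card α) := ⟨#C, hlt⟩
  let f : α → Fin 3 := fun a => if a ∈ C then 0 else if a = p then 1 else 2
  let g : Fin (Fintype.card α) → Fin 3 := fun i => if i < k then 0 else if i = k then 1 else 2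
  have f0 : Fintype.card {a // f a = 0} = #C := by
    rw [Fintype.card_subtype]; congr 1; ext a; simp only [f, mem_filter]; grind
  have f1 : Fintype.card {a // f a = 1} = 1 := by
    rw [Fintype.card_subtype, Finset.card_eq_one]
    refine ⟨p, ?_⟩; ext a; simp only [f, mem_filter]; grind
  have f2 : Fintype.card {a // f a = 2} = Fintype.card α - #C - 1 := by
    have : (univ.filter fun a => f a = 2) = (insert p C)ᶜ := by
      ext a; simp only [f, mem_filter, mem_compl]; grind
    rw [Fintype.card_subtype, this, card_compl, card_insert_of_notMem hp]; omega
  have g0 : Fintype.card {a // g a = 0} = #C := by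
    have : (univ.filter fun a => g a = 0) = Iio k := by
      ext a; simp only [g, mem_filter, mem_Iio]; grind
    rw [Fintype.card_subtype, this, Fin.card_Iio]
  have g1 : Fintype.card {a // g a = 1} = 1 := by
    rw [Fintype.card_subtype, Finset.card_eq_one]
    refine ⟨k, ?_⟩; ext a; simp only [g, mem_filter]; grind
  have g2 : Fintype.card {a // g a = 2} = Fintype.card α - #C - 1 := by
    have : (univ.filter fun a => g a = 2) = Ioi k := by
      ext a; simp only [g, mem_filter, mem_Ioi]; grind
    rw [Fintype.card_subtype, this, Fin.card_Ioi]; simp only [k]; omega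
  have key := card_equiv_comp_eq f g (by
    intro i; fin_cases i
    · exact f0.trans g0.symm
    · exact f1.trans g1.symm
    · exact f2.trans g2.symm)
  rw [Fin.prod_univ_three, f0, f1, f2, Nat.factorial_one, mul_one, Fintype.card_subtype] at key
  rw [← key]
  congr 1
  ext σ
  simp only [mem_filter, mem_univ, true_and, funext_iff, Function.comp_apply]
  constructor
  · intro hC
    -- The position of `p` is the number of its predecessors.
    have hpk : σ p = k := by
      have : (univ.filter fun q => σ q < σ p) = (Iio (σ p)).map σ.symm.toEmbedding := by
        ext q; simp
      apply Fin.ext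
      simp only [k]
      rw [← hC, this, card_map, Fin.card_Iio]
    intro a
    have ha : a ∈ C ↔ σ a < k := by rw [← hC, ← hpk]; simp
    have ha' : a = p ↔ σ a = k := by rw [← hpk]; simp
    simp only [f, g, ha, ha']
  · intro hσ
    have hpk : σ p = k := by
      have := hσ p
      simp only [f, g] at this
      grind
    ext a
    have := hσ a
    simp only [f, g] at this
    simp only [mem_filter, mem_univ, true_and, hpk]
    grind

/-- The subset formula for the Shapley value coincides with the permutation formula. -/
theorem shapley_eq_perm_formula {α : Type*} [Fintype α] [DecidableEq α]
    (ν : Finset α → ℝ) (hν : ν ∅ = 0) (p : α) :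
    shapley (Finset.univ : Finset α) ν p =
      (1 / ((Fintype.card α).factorial : ℝ)) *
        ∑ σ : α ≃ Fin (Fintype.card α),
          (ν (insert p (Finset.univ.filter fun q => σ q < σ p)) -
            ν (Finset.univ.filter fun q => σ q < σ p)) := by
  rw [shapley, ← Finset.sum_fiberwise_of_maps_to
    (g := fun σ : α ≃ Fin (Fintype.card α) => univ.filter fun q => σ q < σ p)
    (t := (univ.erase p).powerset) (fun σ _ => by
      rw [mem_powerset]; intro q hq; simp at hq ⊢; rintro rfl; exact lt_irrefl _ hq), mul_sum]
  refine sum_congr rfl fun C hC => ?_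
  have hp : p ∉ C := fun h => by simpa using mem_powerset.1 hC h
  rw [sum_congr rfl (g := fun _ => ν (insert p C) - ν C) (fun σ hσ => by
    rw [(mem_filter.1 hσ).2]), sum_const, card_equiv_pred_eq p C hp, nsmul_eq_mul, card_univ]
  ring
end

section
/- Efficiency of the Shapley value: for every cooperative game (P, ν), the sum of the Shapley values of all players equals the utility of the whole set of players, i.e., Σ_{p ∈ P} Shapley(p, ν) = ν(P). -/
/-!
With `n = |P|`, expand the sum of all Shapley values and collect the coefficient of each `ν S`.
As a coalition just joined, `S ≠ ∅` gets weight `|S| · (|S|-1)! (n-|S|)! / n! = |S|! (n-|S|)! / n!`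
(`sum_shapley_joined`). As a coalition about to be joined, `S ≠ P` gets the weight
`(n-|S|) · |S|! (n-|S|-1)! / n!`, which is the same number (`sum_shapley_unjoined`). Everything cancels
except `ν P`, with coefficient `1`, and `ν ∅ = 0`.
-/

open Finset

/-- Each nonempty coalition `S ⊆ P` arises as `insert p C` once for every `p ∈ S`, so `ν S` gets
total weight `|S| · (|S|-1)! (n-|S|)! / n!`. The empty coalition contributes nothing on either side
because `ν ∅ = 0`. -/
lemma sum_shapley_joined {α : Type*} [DecidableEq α] (P : Finset α) (ν : Finset α → ℝ)
    (hν : ν ∅ = 0) :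
    ∑ p ∈ P, ∑ C ∈ (P.erase p).powerset,
      (((C.card.factorial * (P.card - C.card - 1).factorial : ℕ) : ℝ) / (P.card.factorial : ℝ)) *
        ν (insert p C) =
    ∑ S ∈ P.powerset,
      (((S.card.factorial * (P.card - S.card).factorial : ℕ) : ℝ) / (P.card.factorial : ℝ)) *
        ν S := by
  have inner : ∀ p ∈ P, ∑ C ∈ (P.erase p).powerset,
      (((C.card.factorial * (P.card - C.card - 1).factorial : ℕ) : ℝ) / (P.card.factorial : ℝ)) *
        ν (insert p C) =
      ∑ S ∈ P.powerset with p ∈ S,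
        ((((S.card - 1).factorial * (P.card - S.card).factorial : ℕ) : ℝ) /
          (P.card.factorial : ℝ)) * ν S := by
    intro p hp
    refine Finset.sum_bij' (fun C _ => insert p C) (fun S _ => S.erase p) ?_ ?_ ?_ ?_ ?_
    · intro C hC
      rw [mem_powerset] at hC
      simp only [mem_filter, mem_powerset, mem_insert_self, and_true]
      exact insert_subset hp (hC.trans (erase_subset _ _))
    · intro S hS
      simp only [mem_filter, mem_powerset] at hS
      exact mem_powerset.2 (erase_subset_erase p hS.1)
    · intro C hC
      exact erase_insert fun h => notMem_erase p P (mem_powerset.1 hC h)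
    · intro S hS
      exact insert_erase (mem_filter.1 hS).2
    · intro C hC
      have hpC : p ∉ C := fun h => notMem_erase p P (mem_powerset.1 hC h)
      rw [card_insert_of_notMem hpC, Nat.add_sub_cancel, Nat.sub_sub]
  rw [Finset.sum_congr rfl inner]
  rw [Finset.sum_comm' (t' := P.powerset) (s' := fun S => S) (by
    intro p S
    simp only [mem_filter, mem_powerset]
    exact ⟨fun h => ⟨h.2.2, h.2.1⟩, fun h => ⟨h.2 h.1, h.2, h.1⟩⟩)]
  refine Finset.sum_congr rfl fun S _ => ?_
  rw [sum_const, nsmul_eq_mul]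
  rcases S.eq_empty_or_nonempty with rfl | hS
  · simp [hν]
  · rw [← Nat.mul_factorial_pred hS.card_pos.ne']
    push_cast
    ring

/-- Each proper coalition `C ⊂ P` can be joined by the `n - |C|` players outside it, so `ν C` gets total
weight `(n-|C|) · |C|! (n-|C|-1)! / n!`; the grand coalition, whose weight would be `1`, is
missing. -/
lemma sum_shapley_unjoined {α : Type*} [DecidableEq α] (P : Finset α) (ν : Finset α → ℝ) :
    ∑ p ∈ P, ∑ C ∈ (P.erase p).powerset,
      (((C.card.factorial * (P.card - C.card - 1).factorial : ℕ) : ℝ) / (P.card.factorial : ℝ)) *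
        ν C =
    (∑ S ∈ P.powerset,
      (((S.card.factorial * (P.card - S.card).factorial : ℕ) : ℝ) / (P.card.factorial : ℝ)) *
        ν S) - ν P := by
  rw [Finset.sum_comm' (t' := P.powerset) (s' := fun S => P \ S) (by
    intro p S
    simp only [mem_powerset, subset_erase, mem_sdiff]
    tauto)]
  have hP : (P.card.factorial : ℝ) ≠ 0 := by positivity
  have key : ∀ S ∈ P.powerset, ∑ _p ∈ P \ S,
      (((S.card.factorial * (P.card - S.card - 1).factorial : ℕ) : ℝ) / (P.card.factorial : ℝ)) *
        ν S =
      (((S.card.factorial * (P.card - S.card).factorial : ℕ) : ℝ) / (P.card.factorial : ℝ)) *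
        ν S - if S = P then ν P else 0 := by
    intro S hS
    rw [mem_powerset] at hS
    rw [sum_const, nsmul_eq_mul, card_sdiff_of_subset hS]
    split_ifs with h
    · subst h
      simp [hP]
    · have hlt : S.card < P.card := card_lt_card (hS.ssubset_of_ne h)
      rw [← Nat.mul_factorial_pred (Nat.sub_pos_of_lt hlt).ne']
      push_cast
      ring
  rw [Finset.sum_congr rfl key, Finset.sum_sub_distrib, Finset.sum_ite_eq',
    if_pos (mem_powerset_self P)]

/-- Efficiency: the Shapley values of all players sum up to the utility of the
whole set of players. -/
theorem shapley_efficiency {α : Type*} [DecidableEq α] (P : Finset α) (ν : Finset α → ℝ)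
    (hν : ν ∅ = 0) :
    ∑ p ∈ P, shapley P ν p = ν P := by
  simp only [shapley, mul_sub, Finset.sum_sub_distrib]
  rw [sum_shapley_joined P ν hν, sum_shapley_unjoined P ν, sub_sub_cancel]
end

section
/- Symmetry of the Shapley value: for every cooperative game (P, ν) and players p₁, p₂ ∈ P, if ν(C ∪ {p₁}) = ν(C ∪ {p₂}) for every C ⊆ P ∖ {p₁, p₂}, then Shapley(p₁, ν) = Shapley(p₂, ν). -/
/-!
Put `Q = P ∖ {p₁, p₂}`. The coalitions avoiding `p₁` are the sets `C` and `C ∪ {p₂}` with `C ⊆ Q`,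
and those avoiding `p₂` are the sets `C` and `C ∪ {p₁}`. With both sums split this way, the terms
at the same `C` agree: the weights depend only on cardinality, `ν (C ∪ {p₁}) = ν (C ∪ {p₂})` by
hypothesis, and both players complete the larger coalitions to `C ∪ {p₁, p₂}`.
-/

open Finset

/-- Symmetry: if two players are interchangeable w.r.t. `ν`, then their Shapley
values are equal. -/
theorem shapley_symmetry {α : Type*} [DecidableEq α] (P : Finset α) (ν : Finset α → ℝ)
    (hν : ν ∅ = 0) (p₁ p₂ : α) (hp₁ : p₁ ∈ P) (hp₂ : p₂ ∈ P)
    (hsym : ∀ C : Finset α, C ⊆ (P.erase p₁).erase p₂ →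
      ν (insert p₁ C) = ν (insert p₂ C)) :
    shapley P ν p₁ = shapley P ν p₂ := by
  rcases eq_or_ne p₁ p₂ with rfl | hne
  · rfl
  have h₁ : P.erase p₁ = insert p₂ ((P.erase p₁).erase p₂) :=
    (insert_erase (mem_erase.2 ⟨hne.symm, hp₂⟩)).symm
  have h₂ : P.erase p₂ = insert p₁ ((P.erase p₁).erase p₂) := by
    rw [erase_right_comm]
    exact (insert_erase (mem_erase.2 ⟨hne, hp₁⟩)).symm
  have n₁ : p₁ ∉ (P.erase p₁).erase p₂ := by simp
  have n₂ : p₂ ∉ (P.erase p₁).erase p₂ := by simp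
  unfold shapley
  rw [h₁, h₂, sum_powerset_insert n₂, sum_powerset_insert n₁]
  congr 1
  · refine sum_congr rfl fun C hC => ?_
    rw [hsym C (mem_powerset.1 hC)]
  · refine sum_congr rfl fun C hC => ?_
    have hC := mem_powerset.1 hC
    rw [card_insert_of_notMem fun h => n₁ (hC h), card_insert_of_notMem fun h => n₂ (hC h),
      hsym C hC, insert_comm]
end

section
/- Shapley value of the indicator game for hitting a set: let P be a finite set and S ⊆ P a nonempty subset, and define the utility ν(C) = 1 if C ∩ S ≠ ∅ and ν(C) = 0 otherwise. Then for every p ∈ P, Shapley(p, ν) = 1/|S| if p ∈ S, and Shapley(p, ν) = 0 if p ∉ S. -/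
/-!
If `p ∉ S`, adding `p` to a coalition never changes whether it meets `S`, so every marginal
contribution vanishes. If `p ∈ S`, the marginal contribution of `p` to `C` is `1` when `C` avoids `S`
and `0` otherwise, so the Shapley value is a sum over `C ⊆ P \ S`. Grouping by cardinality, with
`m = |P \ S|` and `|S| = t + 1`, it becomes `∑ₖ (m choose k) k! (m + t - k)! / (m + t + 1)!`, which the
hockey-stick identity evaluates to `1 / (t + 1)` (`sum_choose_mul_factorial`).
-/

open Finset

/-- The hockey-stick identity with factorials cleared: each summand equals
`m! * t! * (m - k + t).choose t`. -/
theorem sum_choose_mul_factorial (m t : ℕ) :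
    (t + 1) * ∑ k ∈ range (m + 1), m.choose k * (k.factorial * (m + t - k).factorial)
      = (m + t + 1).factorial := by
  have h : ∀ k ∈ range (m + 1), m.choose k * (k.factorial * (m + t - k).factorial)
      = m.factorial * t.factorial * (m - k + t).choose t := by
    intro k hk
    have hk' : k ≤ m := by simpa [Nat.lt_succ_iff] using hk
    obtain ⟨j, rfl⟩ := Nat.exists_eq_add_of_le hk'
    have e1 : k + j + t - k = j + t := by omega
    have e2 : k + j - k = j := by omega
    rw [e1, e2, ← Nat.add_choose_mul_factorial_mul_factorial j t,
      ← Nat.add_choose_mul_factorial_mul_factorial k j, Nat.choose_symm_add (a := k)]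
    ring
  rw [sum_congr rfl h, ← mul_sum]
  have hr := sum_range_reflect (fun i => (i + t).choose t) (m + 1)
  simp only [Nat.add_sub_cancel] at hr
  rw [hr, Nat.sum_range_add_choose, add_assoc m t 1,
    ← Nat.add_choose_mul_factorial_mul_factorial m (t + 1), Nat.factorial_succ t]
  ring

/-- Shapley value of the indicator game for hitting a nonempty set `S ⊆ P`:
players in `S` get `1/|S|` and players outside `S` get `0`. -/
theorem shapley_indicator_game {α : Type*} [DecidableEq α] (P S : Finset α)
    (hSP : S ⊆ P) (hS : S.Nonempty)
    (ν : Finset α → ℝ) (hνdef : ∀ C : Finset α, ν C = if (C ∩ S).Nonempty then 1 else 0) :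
    ∀ p ∈ P,
      shapley P ν p = if p ∈ S then 1 / (S.card : ℝ) else 0 := by
  intro p hp
  unfold shapley
  split_ifs with hpS
  · have hmarg : ∀ C : Finset α, ν (insert p C) - ν C = if Disjoint C S then 1 else 0 := by
      intro C
      have h1 : (insert p C ∩ S).Nonempty := ⟨p, by simp [hpS]⟩
      rw [hνdef, hνdef, if_pos h1]
      by_cases hd : Disjoint C S
      · simp [hd, disjoint_iff_inter_eq_empty.mp hd]
      · simp [hd, not_disjoint_iff_nonempty_inter.mp hd]
    have hfil : (P.erase p).powerset.filter (fun C => Disjoint C S) = (P \ S).powerset := by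
      ext C
      simp only [mem_filter, mem_powerset, subset_sdiff, subset_erase]
      constructor
      · rintro ⟨⟨h, _⟩, hd⟩
        exact ⟨h, hd⟩
      · rintro ⟨h, hd⟩
        exact ⟨⟨h, fun hpC => disjoint_left.mp hd hpC hpS⟩, hd⟩
    simp only [hmarg, mul_ite, mul_one, mul_zero]
    rw [← sum_filter, hfil, ← sum_div, ← Nat.cast_sum]
    obtain ⟨t, ht⟩ : ∃ t, S.card = t + 1 := Nat.exists_eq_succ_of_ne_zero hS.card_pos.ne'
    have hP : P.card = (P \ S).card + t + 1 := by
      rw [← card_sdiff_add_card_eq_card hSP, ht, add_assoc]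
    rw [sum_powerset_apply_card
      (fun k => k.factorial * (P.card - k - 1).factorial), hP, ht]
    have hsub : ∀ k, (P \ S).card + t + 1 - k - 1 = (P \ S).card + t - k := by omega
    simp only [hsub, smul_eq_mul]
    have key := sum_choose_mul_factorial (P \ S).card t
    rw [div_eq_div_iff (by positivity) (by positivity), one_mul, mul_comm]
    exact_mod_cast key
  · refine sum_eq_zero fun C _ => ?_
    rw [hνdef, hνdef, insert_inter_of_notMem hpS, sub_self, mul_zero]
end

section
/- Closed formula for max aggregation over a single relation: let D be a finite nonempty set with n = |D|, τ : D → ℝ, and define the utility ν(C) = 0 if C = ∅ and ν(C) = max_{t ∈ C} τ(t) otherwise. For a ∈ ℝ, let m_{≤a} = |{t' ∈ D : τ(t') ≤ a}| and m_{<a} = |{t' ∈ D : τ(t') < a}|, and let q_k = k!·(n−k−1)!/n!. Then for every t ∈ D: Shapley(t, ν) = τ(t)/n + Σ_{a ∈ τ(D), a < τ(t)} (τ(t) − a) · Σ_{k=1}^{n−1} q_k · (C(m_{≤a}, k) − C(m_{<a}, k)), where C(·,·) denotes the binomial coefficient. -/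
/-!
The empty coalition contributes `q₀ · τ t = τ t / n`. A nonempty coalition `C` with maximum `a`
contributes `q_{|C|} · (τ t - a)` if `a < τ t` and nothing otherwise. Grouping the coalitions by
their maximum `a < τ t`, those with maximum `a` are exactly the subsets of `{τ ≤ a}` that are not
subsets of `{τ < a}` (`filter_max_eq`); neither of these sets contains `t`, and a set with `m`
elements has `C(m, k)` subsets of size `k`, which gives the inner sum.
-/

open Finset

/-- The summation range `range n` serves for every `S` of fewer than `n` elements, so that the
sums for two different sets can be subtracted termwise. -/
lemma sum_powerset_card_eq {α : Type*} (S : Finset α) (n : ℕ) (hS : S.card < n) (q : ℕ → ℝ) :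
    ∑ C ∈ S.powerset, q C.card = ∑ k ∈ range n, q k * (S.card.choose k : ℝ) := by
  rw [Finset.sum_powerset_apply_card]
  simp only [nsmul_eq_mul]
  rw [← Finset.sum_subset (Finset.range_subset_range.2 hS)]
  · exact Finset.sum_congr rfl fun k _ => mul_comm _ _
  · intro k _ hk
    rw [Nat.choose_eq_zero_of_lt (by simpa using hk)]
    simp

/-- The nonempty coalitions avoiding `t` with maximum `a < τ t`. -/
lemma filter_max_eq {α : Type*} [DecidableEq α] (D : Finset α) (τ : α → ℝ) (ν : Finset α → ℝ)
    (hνdef : ∀ C : Finset α, ν C = if h : C.Nonempty then C.sup' h τ else 0)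
    (t : α) (a : ℝ) (ha : a < τ t) :
    ((D.erase t).powerset.erase ∅).filter (fun C => ν C = a) =
      (D.filter fun t' => τ t' ≤ a).powerset \ (D.filter fun t' => τ t' < a).powerset := by
  ext C
  simp only [mem_filter, mem_erase, mem_powerset, mem_sdiff]
  constructor
  · rintro ⟨⟨hne, hC⟩, hm⟩
    have hne' : C.Nonempty := nonempty_iff_ne_empty.2 hne
    rw [hνdef, dif_pos hne'] at hm
    refine ⟨fun x hx => mem_filter.2 ⟨mem_of_mem_erase (hC hx), hm ▸ le_sup' τ hx⟩, fun h => ?_⟩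
    obtain ⟨x, hx, hxe⟩ := exists_mem_eq_sup' hne' τ
    have := (mem_filter.1 (h hx)).2
    linarith
  · rintro ⟨hle, hlt⟩
    obtain ⟨x, hx, hxn⟩ := not_subset.1 hlt
    have hxD := mem_filter.1 (hle hx)
    have hxa : a ≤ τ x := by
      by_contra h
      exact hxn (mem_filter.2 ⟨hxD.1, not_le.1 h⟩)
    refine ⟨⟨ne_empty_of_mem hx, fun y hy => ?_⟩, ?_⟩
    · have hy' := mem_filter.1 (hle hy)
      refine mem_erase.2 ⟨?_, hy'.1⟩
      rintro rfl
      linarith [hy'.2]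
    · rw [hνdef, dif_pos ⟨x, hx⟩]
      exact le_antisymm (sup'_le _ _ fun y hy => (mem_filter.1 (hle hy)).2)
        (hxa.trans (le_sup' τ hx))

/-- The marginal contribution of `t` to a nonempty coalition, indexed by the possible maxima. -/
lemma marginal_eq {α : Type*} [DecidableEq α] (D : Finset α) (τ : α → ℝ) (ν : Finset α → ℝ)
    (hνdef : ∀ C : Finset α, ν C = if h : C.Nonempty then C.sup' h τ else 0)
    (t : α) (C : Finset α) (hC : C ⊆ D) (hne : C.Nonempty) :
    ν (insert t C) - ν C =
      ∑ a ∈ (D.image τ).filter (fun a => a < τ t), if ν C = a then τ t - a else 0 := by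
  have hins : ν (insert t C) = max (τ t) (ν C) := by
    rw [hνdef, hνdef, dif_pos (insert_nonempty t C), dif_pos hne, sup'_insert]
  rw [hins, Finset.sum_ite_eq]
  split_ifs with h
  · rw [max_eq_left (mem_filter.1 h).2.le]
  · have hmem : ν C ∈ D.image τ := by
      obtain ⟨x, hx, hxe⟩ := exists_mem_eq_sup' hne τ
      rw [hνdef, dif_pos hne, hxe]
      exact mem_image_of_mem τ (hC hx)
    have : τ t ≤ ν C := by
      by_contra h'
      exact h (mem_filter.2 ⟨hmem, not_le.1 h'⟩)
    rw [max_eq_right this, sub_self]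

/-- Closed formula for max aggregation over a single relation. -/
theorem shapley_max_closed_formula {α : Type*} [DecidableEq α] (D : Finset α)
    (hD : D.Nonempty) (τ : α → ℝ) (ν : Finset α → ℝ)
    (hνdef : ∀ C : Finset α, ν C = if h : C.Nonempty then C.sup' h τ else 0) :
    ∀ t ∈ D,
      shapley D ν t =
        τ t / (D.card : ℝ) +
          ∑ a ∈ (D.image τ).filter (fun a => a < τ t),
            (τ t - a) *
              ∑ k ∈ Finset.Icc 1 (D.card - 1),
                (((k.factorial * (D.card - k - 1).factorial : ℕ) : ℝ) /
                    (D.card.factorial : ℝ)) *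
                  ((((D.filter fun t' => τ t' ≤ a).card).choose k : ℝ) -
                    (((D.filter fun t' => τ t' < a).card).choose k : ℝ)) := by
  intro t ht
  unfold shapley
  have hn : 0 < D.card := hD.card_pos
  set q : ℕ → ℝ := fun k =>
    ((k.factorial * (D.card - k - 1).factorial : ℕ) : ℝ) / (D.card.factorial : ℝ) with hq
  change ∑ C ∈ (D.erase t).powerset, q C.card * (ν (insert t C) - ν C) =
    τ t / (D.card : ℝ) + ∑ a ∈ (D.image τ).filter (fun a => a < τ t),
      (τ t - a) * ∑ k ∈ Finset.Icc 1 (D.card - 1), q k *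
        ((((D.filter fun t' => τ t' ≤ a).card).choose k : ℝ) -
          (((D.filter fun t' => τ t' < a).card).choose k : ℝ))
  rw [← Finset.add_sum_erase _ _ (empty_mem_powerset (D.erase t))]
  congr 1
  · have h1 : ν (insert t ∅) = τ t := by
      rw [hνdef, dif_pos (insert_nonempty t ∅)]
      simp
    have h0 : ν ∅ = 0 := by
      rw [hνdef, dif_neg Finset.not_nonempty_empty]
    have hq0 : q 0 = 1 / (D.card : ℝ) := by
      obtain ⟨m, hm⟩ := Nat.exists_eq_succ_of_ne_zero hn.ne'
      simp only [hq, hm, Nat.factorial_succ, Nat.succ_eq_add_one]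
      have := Nat.factorial_ne_zero m
      simp
      field_simp
    rw [h1, h0, card_empty, hq0]
    ring
  · have hstep : ∀ C ∈ (D.erase t).powerset.erase ∅,
        q C.card * (ν (insert t C) - ν C) =
          ∑ a ∈ (D.image τ).filter (fun a => a < τ t),
            if ν C = a then (τ t - a) * q C.card else 0 := by
      intro C hC
      obtain ⟨hne, hC⟩ := mem_erase.1 hC
      rw [marginal_eq D τ ν hνdef t C ((mem_powerset.1 hC).trans (erase_subset _ _))
        (nonempty_iff_ne_empty.2 hne), mul_sum]
      refine sum_congr rfl fun a _ => ?_
      rw [mul_ite, mul_zero, mul_comm]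
    rw [sum_congr rfl hstep, sum_comm]
    refine sum_congr rfl fun a ha => ?_
    have hat : a < τ t := (mem_filter.1 ha).2
    rw [← sum_filter, filter_max_eq D τ ν hνdef t a hat, ← mul_sum]
    congr 1
    have hsub : (D.filter fun t' => τ t' < a) ⊆ D.filter fun t' => τ t' ≤ a :=
      monotone_filter_right D fun _ _ h => le_of_lt h
    have hcard : (D.filter fun t' => τ t' ≤ a).card < D.card :=
      card_lt_card (filter_ssubset.2 ⟨t, ht, not_le.2 hat⟩)
    rw [sum_sdiff_eq_sub (powerset_mono.2 hsub), sum_powerset_card_eq _ _ hcard,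
      sum_powerset_card_eq _ _ ((card_le_card hsub).trans_lt hcard), ← sum_sub_distrib]
    symm
    -- The index `k = 0`, absent from `Icc 1 (n - 1)`, contributes `q 0 * (1 - 1) = 0`.
    refine (sum_congr rfl fun k _ => mul_sub _ _ _).trans (sum_subset ?_ ?_)
    · intro k hk
      simp only [mem_Icc, mem_range] at hk ⊢
      omega
    · intro k hk hk'
      simp only [mem_Icc, mem_range] at hk hk'
      obtain rfl : k = 0 := by omega
      simp
end

section
/- Closed formula for average aggregation over a single relation: let D be a finite set with n = |D| ≥ 2, τ : D → ℝ, and define the utility ν(C) = 0 if C = ∅ and ν(C) = (1/|C|)·Σ_{t ∈ C} τ(t) otherwise. Let H(n) = Σ_{k=1}^{n} 1/k be the n-th partial sum of the harmonic series. Then for every t ∈ D: Shapley(t, ν) = (H(n)/n)·τ(t) − ((H(n) − 1)/(n(n−1))) · Σ_{t' ∈ D, t' ≠ t} τ(t'). -/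
/-!
Write `E = D \ {t}`, `m = |E| = n - 1` and `S = ∑_{E} τ`. For a coalition `C ⊆ E` of size `k` the
marginal contribution of `t` is `τ t / (k + 1) - (∑_{C} τ) / (k (k + 1))`, so only its average over
the `k`-subsets of `E` matters. Each `x ∈ E` lies in a fraction `k / m` of these subsets
(`card_mul_sum_powersetCard_sum`), and the Shapley weight of size `k` is `1 / (n * choose m k)`
(`choose_mul_weight`). Hence size `k` contributes `(τ t / (k + 1) - [k ≠ 0] S / (m (k + 1))) / n`,
and summing over `0 ≤ k ≤ m` yields `H(n)` for `τ t` and `H(n) - 1` for `S / m`.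
-/

open Finset

/-- Double counting: each `x ∈ E` lies in a fraction `k / |E|` of the `k`-subsets of `E`. -/
lemma card_mul_sum_powersetCard_sum {α : Type*} [DecidableEq α] (E : Finset α) (τ : α → ℝ)
    (k : ℕ) (hk : k ≤ E.card) :
    (E.card : ℝ) * ∑ C ∈ powersetCard k E, ∑ x ∈ C, τ x =
      (E.card.choose k : ℝ) * k * ∑ x ∈ E, τ x := by
  have hswap : ∑ C ∈ powersetCard k E, ∑ x ∈ C, τ x =
      ∑ x ∈ E, ∑ C ∈ powersetCard k E with x ∈ C, τ x := by
    apply Finset.sum_comm'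
    intro C x
    simp only [mem_powersetCard, mem_filter]
    constructor
    · rintro ⟨⟨h1, h2⟩, h3⟩
      exact ⟨⟨⟨h1, h2⟩, h3⟩, h1 h3⟩
    · rintro ⟨⟨h1, h3⟩, -⟩
      exact ⟨h1, h3⟩
  rw [hswap, mul_sum, mul_sum]
  refine sum_congr rfl fun x hx => ?_
  rw [sum_const, nsmul_eq_mul, ← mul_assoc]
  congr 1
  -- The `k`-subsets avoiding `x` are easier to count: they are the `k`-subsets of `E.erase x`.
  have havoid : {C ∈ powersetCard k E | x ∉ C} = powersetCard k (E.erase x) := by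
    ext C
    simp only [mem_filter, mem_powersetCard, subset_erase]
    tauto
  have hsplit := card_filter_add_card_filter_not (s := powersetCard k E) (fun C => x ∈ C)
  rw [havoid, card_powersetCard, card_powersetCard, card_erase_of_mem hx] at hsplit
  obtain ⟨m, hm⟩ : ∃ m, E.card = m + 1 :=
    ⟨E.card - 1, by have := card_pos.mpr ⟨x, hx⟩; omega⟩
  rw [hm] at hsplit hk ⊢
  rw [Nat.add_sub_cancel] at hsplit
  have hchoose := Nat.choose_mul_succ_eq m k
  have hsplit' : (({C ∈ powersetCard k E | x ∈ C}.card : ℕ) : ℝ) + (m.choose k : ℝ) =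
      ((m + 1).choose k : ℝ) := by exact_mod_cast hsplit
  have hchoose' : (m.choose k : ℝ) * ((m : ℝ) + 1) =
      ((m + 1).choose k : ℝ) * ((m : ℝ) + 1 - k) := by
    have := congrArg (Nat.cast (R := ℝ)) hchoose
    push_cast [Nat.cast_sub hk] at this
    exact this
  push_cast
  linear_combination ((m : ℝ) + 1) * hsplit' - hchoose'

lemma choose_mul_weight (m k : ℕ) (hk : k ≤ m) :
    (m.choose k : ℝ) *
      (((k.factorial * (m + 1 - k - 1).factorial : ℕ) : ℝ) / ((m + 1).factorial : ℝ)) =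
      1 / ((m : ℝ) + 1) := by
  have h := congrArg (Nat.cast (R := ℝ)) (Nat.choose_mul_factorial_mul_factorial hk)
  have he : m + 1 - k - 1 = m - k := by omega
  have hm : (m.factorial : ℝ) ≠ 0 := by positivity
  rw [he, Nat.factorial_succ]
  push_cast at h ⊢
  field_simp
  linear_combination h

/-- Closed formula for average aggregation over a single relation. -/
theorem shapley_avg_closed_formula {α : Type*} [DecidableEq α] (D : Finset α)
    (hD : 2 ≤ D.card) (τ : α → ℝ) (ν : Finset α → ℝ)
    (hνdef : ∀ C : Finset α,
      ν C = if C = ∅ then 0 else (∑ t ∈ C, τ t) / (C.card : ℝ)) :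
    ∀ t ∈ D,
      shapley D ν t =
        ((∑ k ∈ Finset.Icc 1 D.card, (1 : ℝ) / (k : ℝ)) / (D.card : ℝ)) * τ t -
          (((∑ k ∈ Finset.Icc 1 D.card, (1 : ℝ) / (k : ℝ)) - 1) /
              ((D.card : ℝ) * ((D.card : ℝ) - 1))) *
            ∑ t' ∈ D.erase t, τ t' := by
  intro t ht
  obtain ⟨m, hm⟩ : ∃ m, D.card = m + 1 := ⟨D.card - 1, by omega⟩
  have hE : (D.erase t).card = m := by rw [card_erase_of_mem ht, hm, Nat.add_sub_cancel]
  have htE : t ∉ D.erase t := notMem_erase t D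
  have hm0 : (m : ℝ) ≠ 0 := by
    have : m ≠ 0 := by omega
    exact_mod_cast this
  have hm1 : (m : ℝ) + 1 ≠ 0 := by positivity
  unfold shapley
  rw [hm, sum_powerset, hE]
  set E := D.erase t with hEdef
  set S := ∑ x ∈ E, τ x with hS
  -- The marginal contribution; at `C = ∅` both quotients with divisor `0` are `0`, as required.
  have hmarg : ∀ C ⊆ E, ν (insert t C) - ν C =
      τ t / ((C.card : ℝ) + 1) - (∑ x ∈ C, τ x) / ((C.card : ℝ) * ((C.card : ℝ) + 1)) := by
    intro C hC
    have htC : t ∉ C := fun h => htE (hC h)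
    rw [hνdef, hνdef, if_neg (insert_ne_empty t C), sum_insert htC, card_insert_of_notMem htC]
    rcases C.eq_empty_or_nonempty with rfl | hne
    · simp
    · have hc : (C.card : ℝ) ≠ 0 := by exact_mod_cast hne.card_pos.ne'
      have hc1 : (C.card : ℝ) + 1 ≠ 0 := by positivity
      rw [if_neg hne.ne_empty]
      push_cast
      field_simp
      ring
  have hlayer : ∀ k ∈ range (m + 1),
      ∑ C ∈ powersetCard k E,
        (((C.card.factorial * (m + 1 - C.card - 1).factorial : ℕ) : ℝ) /
          ((m + 1).factorial : ℝ)) * (ν (insert t C) - ν C) =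
      (1 / ((m : ℝ) + 1)) * (τ t * (1 / ((k : ℝ) + 1)) -
        S / m * (1 / ((k : ℝ) + 1) - if k = 0 then 1 else 0)) := by
    intro k hk
    have hkm : k ≤ m := by
      have := mem_range.mp hk
      omega
    have hw := choose_mul_weight m k hkm
    have hdc := card_mul_sum_powersetCard_sum E τ k (hE.symm ▸ hkm)
    rw [hE, ← hS] at hdc
    set w : ℝ := ((k.factorial * (m + 1 - k - 1).factorial : ℕ) : ℝ) /
      ((m + 1).factorial : ℝ) with hwdef
    have hstep : ∀ C ∈ powersetCard k E,
        (((C.card.factorial * (m + 1 - C.card - 1).factorial : ℕ) : ℝ) /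
          ((m + 1).factorial : ℝ)) * (ν (insert t C) - ν C) =
        w * (τ t / ((k : ℝ) + 1)) - w / ((k : ℝ) * ((k : ℝ) + 1)) * ∑ x ∈ C, τ x := by
      intro C hC
      obtain ⟨hCE, hCk⟩ := mem_powersetCard.mp hC
      rw [hmarg C hCE, hCk, ← hwdef]
      ring
    rw [sum_congr rfl hstep, sum_sub_distrib, sum_const, card_powersetCard, hE, nsmul_eq_mul,
      ← mul_sum, ← hw]
    have hk1 : (k : ℝ) + 1 ≠ 0 := by positivity
    rcases Nat.eq_zero_or_pos k with rfl | hkpos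
    · simp
    · have hk0 : (k : ℝ) ≠ 0 := by exact_mod_cast hkpos.ne'
      rw [if_neg hkpos.ne']
      have hsum : ∑ C ∈ powersetCard k E, ∑ x ∈ C, τ x = (m.choose k : ℝ) * k * S / m := by
        rw [eq_div_iff hm0, mul_comm]
        exact hdc
      rw [hsum]
      field_simp
      ring
  have hH : ∑ k ∈ Icc 1 (m + 1), (1 : ℝ) / (k : ℝ) =
      ∑ k ∈ range (m + 1), 1 / ((k : ℝ) + 1) := by
    rw [range_eq_Ico, ← Ico_add_one_right_eq_Icc]
    simpa using (sum_Ico_add' (fun k : ℕ => (1 : ℝ) / (k : ℝ)) 0 (m + 1) 1).symm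
  rw [sum_congr rfl hlayer, hH, ← mul_sum, sum_sub_distrib, ← mul_sum, ← mul_sum,
    sum_sub_distrib, sum_ite_eq' (range (m + 1)) 0, if_pos (mem_range.mpr (Nat.succ_pos m))]
  push_cast
  rw [add_sub_cancel_right]
  field_simp
end

section
/- Additivity of quantile aggregation over monotone summands: let q ∈ (0,1), let B be a nonempty finite multiset of real numbers, and let γ₁, γ₂ : ℝ → ℝ be monotonically increasing (non-decreasing) functions. Then Qnt_q(map (γ₁ + γ₂) B) = Qnt_q(map γ₁ B) + Qnt_q(map γ₂ B), where (γ₁ + γ₂)(x) = γ₁(x) + γ₂(x). -/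
/-! A non-decreasing `γ` carries the sorted list of `B` to the sorted list of `map γ B`
(`sort_map_of_monotone`), so the `i`-th smallest element of `map γ B` is `γ` applied to the
`i`-th smallest element of `B`. Since `γ₁`, `γ₂` and `γ₁ + γ₂` are all non-decreasing, each order
statistic is additive (`nthSmallest_map_add`). The three mapped multisets have the same
cardinality, so the quantile is the same average of two order statistics for each of them. -/

/-- The `i`-th smallest element (counted with multiplicity, `1 ≤ i ≤ |B|`) of a
finite multiset of real numbers. -/
noncomputable def nthSmallest (B : Multiset ℝ) (i : ℕ) : ℝ :=
  (B.sort (· ≤ ·)).getD (i - 1) 0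

/-- The `q`-quantile of a finite nonempty multiset of real numbers:
`Qnt_q(B) = (x_{⌈q·n⌉}(B) + x_{⌊q·n + 1⌋}(B)) / 2` where `n = |B|`. -/
noncomputable def qnt (q : ℝ) (B : Multiset ℝ) : ℝ :=
  (nthSmallest B ⌈q * (Multiset.card B : ℝ)⌉₊ +
    nthSmallest B ⌊q * (Multiset.card B : ℝ) + 1⌋₊) / 2

/-- A non-decreasing map commutes with sorting. `Multiset.map_sort` does not apply, since it
needs `f` to reflect the order as well; here uniqueness of the sorted arrangement is used. -/
theorem sort_map_of_monotone (B : Multiset ℝ) {f : ℝ → ℝ} (hf : Monotone f) :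
    (B.map f).sort (· ≤ ·) = (B.sort (· ≤ ·)).map f := by
  refine List.Perm.eq_of_pairwise' (r := (· ≤ ·)) (Multiset.pairwise_sort _ _) ?_ ?_
  · exact (Multiset.pairwise_sort B (· ≤ ·)).map f fun a b h => hf h
  · rw [← Multiset.coe_eq_coe, Multiset.sort_eq, ← Multiset.map_coe, Multiset.sort_eq]

/-- Holds for every index: out of range, all three terms are the default value `0`. -/
theorem nthSmallest_map_add (B : Multiset ℝ) {f g : ℝ → ℝ} (hf : Monotone f)
    (hg : Monotone g) (i : ℕ) :
    nthSmallest (B.map fun x => f x + g x) i =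
      nthSmallest (B.map f) i + nthSmallest (B.map g) i := by
  unfold nthSmallest
  rw [sort_map_of_monotone B hf, sort_map_of_monotone B hg,
    sort_map_of_monotone B (hf.add hg)]
  simp only [List.getD_eq_getElem?_getD, List.getElem?_map]
  cases (B.sort (· ≤ ·))[i - 1]? <;> simp

/-- Additivity of quantile aggregation over monotone summands. -/
theorem qnt_map_add_monotone (q : ℝ) (hq₁ : 0 < q) (hq₂ : q < 1)
    (B : Multiset ℝ) (hB : B ≠ 0)
    (γ₁ γ₂ : ℝ → ℝ) (hγ₁ : Monotone γ₁) (hγ₂ : Monotone γ₂) :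
    qnt q (B.map fun x => γ₁ x + γ₂ x) = qnt q (B.map γ₁) + qnt q (B.map γ₂) := by
  unfold qnt
  simp only [nthSmallest_map_add B hγ₁ hγ₂, Multiset.card_map]
  ring
end

section
/- The Hilbert matrix is invertible: for every n ≥ 1, the n × n matrix N over ℚ with entries N_{i,j} = 1/(i + j + 1) for i, j ∈ {0, …, n−1} (equivalently, N_{i,j} = 1/(i + j − 1) in 1-indexed form) has nonzero determinant. -/
/-!
If `v` is in the kernel of the Hilbert matrix, the rational function `∑ j, v j / (X + j + 1)`
vanishes at `0, …, n - 1`. Clearing denominators gives the polynomial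
`∑ j, v j * ∏ k ≠ j, (X + k + 1)`, which has degree less than `n` and `n` distinct roots, hence is
zero. Evaluating it at `-(j + 1)` leaves only the `j`-th term and shows `v j = 0`.
-/

open Polynomial in
/-- The numerator of `∑ j, v j / (X + j + 1)` over the common denominator `∏ j, (X + j + 1)`. -/
noncomputable def hilbertNumerator {n : ℕ} (v : Fin n → ℚ) : ℚ[X] :=
  ∑ j : Fin n, C (v j) * ∏ k ∈ Finset.univ.erase j, (X + C ((k : ℕ) + 1 : ℚ))

lemma natDegree_hilbertNumerator_lt {n : ℕ} (hn : 1 ≤ n) (v : Fin n → ℚ) :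
    (hilbertNumerator v).natDegree < n := by
  suffices h : (hilbertNumerator v).natDegree ≤ n - 1 by omega
  refine Polynomial.natDegree_sum_le_of_forall_le _ _ fun j _ => ?_
  refine (Polynomial.natDegree_C_mul_le _ _).trans ((Polynomial.natDegree_prod_le _ _).trans ?_)
  simp only [Polynomial.natDegree_X_add_C]
  simp

lemma eval_hilbertNumerator {n : ℕ} (v : Fin n → ℚ) (x : ℚ) :
    (hilbertNumerator v).eval x =
      ∑ j : Fin n, v j * ∏ k ∈ Finset.univ.erase j, (x + ((k : ℕ) + 1)) := by
  simp [hilbertNumerator, Polynomial.eval_finsetSum, Polynomial.eval_prod]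

/-- The Hilbert matrix is invertible: the `n × n` matrix with entries
`1 / (i + j + 1)` (0-indexed) over `ℚ` has nonzero determinant. -/
theorem hilbert_matrix_det_ne_zero (n : ℕ) (hn : 1 ≤ n) :
    Matrix.det (Matrix.of fun i j : Fin n => (1 : ℚ) / (((i : ℕ) + (j : ℕ) + 1 : ℕ) : ℚ)) ≠ 0 := by
  intro hdet
  obtain ⟨v, hv, hker⟩ := Matrix.exists_mulVec_eq_zero_iff.mpr hdet
  have hroot : ∀ i : Fin n, (hilbertNumerator v).eval ((i : ℕ) : ℚ) = 0 := by
    intro i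
    have hi : ∑ j : Fin n, 1 / (((i : ℕ) + (j : ℕ) + 1 : ℕ) : ℚ) * v j = 0 := congrFun hker i
    rw [eval_hilbertNumerator,
      ← mul_zero (∏ k : Fin n, (((i : ℕ) : ℚ) + ((k : ℕ) + 1))), ← hi, Finset.mul_sum]
    refine Finset.sum_congr rfl fun j _ => ?_
    rw [← Finset.mul_prod_erase _ _ (Finset.mem_univ j)]
    have hne : ((i : ℕ) : ℚ) + ((j : ℕ) + 1) ≠ 0 := by positivity
    push_cast
    rw [add_assoc]
    field_simp
  have hzero : hilbertNumerator v = 0 := by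
    refine Polynomial.eq_zero_of_natDegree_lt_card_of_eval_eq_zero _
      (f := fun i : Fin n => ((i : ℕ) : ℚ)) ?_ hroot ?_
    · intro a b hab
      exact Fin.ext (Nat.cast_injective (R := ℚ) hab)
    · simpa using natDegree_hilbertNumerator_lt hn v
  apply hv
  funext j
  have hj := eval_hilbertNumerator v (-((j : ℕ) + 1))
  -- every term other than the `j`-th contains the factor `X + j + 1`
  rw [hzero, Polynomial.eval_zero, Finset.sum_eq_single j] at hj
  · refine (mul_eq_zero.mp hj.symm).resolve_right (Finset.prod_ne_zero_iff.mpr fun k hk h => ?_)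
    have hkj : ((k : ℕ) : ℚ) = (j : ℕ) := by linarith
    exact (Finset.ne_of_mem_erase hk) (Fin.ext (by exact_mod_cast hkj))
  · intro b _ hb
    rw [Finset.prod_eq_zero (Finset.mem_erase.mpr ⟨hb.symm, Finset.mem_univ j⟩) (by ring), mul_zero]
  · simp
end

section
/- The Hankel matrix with factorial entries is invertible: for every n ≥ 1, the n × n matrix M' over ℚ with entries M'_{i,j} = (i + j + 1)! for i, j ∈ {0, …, n−1} (equivalently, M'_{r,j} = (r + j − 1)! in 1-indexed form) has nonzero determinant. -/
/-!
Since `(i + j + 1)! = (i + 1)! * ((i + 2) (i + 3) ⋯ (i + j + 1))`, pulling `(i + 1)!` out of row `i`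
leaves the matrix of values at the points `i + 2` of the rising factorial polynomials
`ascPochhammer ℚ j`. These are monic of degree `j`, so that matrix has the Vandermonde
determinant of the points `i + 2`, which is nonzero because the points are distinct.
-/

/-- The Hankel matrix with factorial entries is invertible: the `n × n` matrix
with entries `(i + j + 1)!` (0-indexed) over `ℚ` has nonzero determinant. -/
theorem factorial_hankel_matrix_det_ne_zero (n : ℕ) (hn : 1 ≤ n) :
    Matrix.det
      (Matrix.of fun i j : Fin n => ((((i : ℕ) + (j : ℕ) + 1).factorial : ℕ) : ℚ)) ≠ 0 := by
  have entry : (Matrix.of fun i j : Fin n => ((((i : ℕ) + (j : ℕ) + 1).factorial : ℕ) : ℚ)) =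
      Matrix.of fun i j : Fin n => (((i : ℕ) + 1).factorial : ℚ) *
        (Matrix.of fun i j : Fin n =>
          (ascPochhammer ℚ (j : ℕ)).eval (((i : ℕ) + 2 : ℕ) : ℚ)) i j := by
    ext i j
    simp only [Matrix.of_apply]
    rw [← ascPochhammer_eval_cast, ascPochhammer_nat_eq_ascFactorial, ← Nat.cast_mul,
      Nat.factorial_mul_ascFactorial, Nat.add_right_comm]
  rw [entry, Matrix.det_mul_column, ← Matrix.det_eval_matrixOfPolynomials_eq_det_vandermonde
    (fun i : Fin n => (((i : ℕ) + 2 : ℕ) : ℚ)) (fun j : Fin n => ascPochhammer ℚ (j : ℕ))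
    (fun j => ascPochhammer_natDegree ℚ _) (fun j => monic_ascPochhammer ℚ _)]
  refine mul_ne_zero (Finset.prod_ne_zero_iff.mpr fun i _ => ?_) ?_
  · exact_mod_cast Nat.factorial_ne_zero _
  · rw [Matrix.det_vandermonde_ne_zero_iff]
    intro a b h
    simpa [Fin.ext_iff] using h
end

section
/- Invertibility of the coefficient matrix arising in the Shapley hardness reduction: for every m ≥ 0, the (m+1) × (m+1) matrix M over ℚ with entries M_{r,j} = j! · (m + r − j)! / (m + r + 1)! for r, j ∈ {0, …, m} is invertible (has nonzero determinant). -/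
/-!
Reversing the columns (`i = m - j`) turns `(m + r - j)!` into `(r + i)! = r! · P i (r + 1)`, where
`P i = X (X + 1) ⋯ (X + i - 1)` is the rising factorial, monic of degree `i`. Hence the matrix is,
up to nonzero row factors `r! / (m + r + 1)!`, nonzero column factors `j!` and a column permutation,
the matrix `P i (r + 1)`, whose determinant equals the Vandermonde determinant of the distinct
nodes `r + 1`.
-/

/-- The values of the rising factorials of degree `0, …, m` at the nodes `1, …, m + 1` form a
matrix with the (nonzero) Vandermonde determinant of these nodes. -/
lemma det_ascPochhammer_ne_zero (m : ℕ) :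
    (Matrix.of fun r i : Fin (m + 1) =>
      (ascPochhammer ℚ (i : ℕ)).eval (((r : ℕ) : ℚ) + 1)).det ≠ 0 := by
  rw [← Matrix.det_eval_matrixOfPolynomials_eq_det_vandermonde
    (fun r : Fin (m + 1) => ((r : ℕ) : ℚ) + 1) (fun i => ascPochhammer ℚ (i : ℕ))
    (fun i => ascPochhammer_natDegree ℚ _) (fun i => monic_ascPochhammer ℚ _)]
  rw [Matrix.det_vandermonde_ne_zero_iff]
  intro a b h
  simpa [Fin.ext_iff] using h

lemma factorial_add_eq_eval_ascPochhammer (r i : ℕ) :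
    ((r + i).factorial : ℚ) = r.factorial * (ascPochhammer ℚ i).eval ((r : ℚ) + 1) := by
  rw [← Nat.factorial_mul_ascFactorial, Nat.cast_mul, ← ascPochhammer_nat_eq_ascFactorial,
    ascPochhammer_eval_cast]
  push_cast
  rfl

/-- Invertibility of the coefficient matrix arising in the Shapley hardness
reduction: the `(m+1) × (m+1)` matrix with entries
`j! · (m + r − j)! / (m + r + 1)!` has nonzero determinant over `ℚ`. -/
theorem shapley_reduction_matrix_det_ne_zero (m : ℕ) :
    Matrix.det
      (Matrix.of fun r j : Fin (m + 1) =>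
        (((j : ℕ).factorial * (m + (r : ℕ) - (j : ℕ)).factorial : ℕ) : ℚ) /
          (((m + (r : ℕ) + 1).factorial : ℕ) : ℚ)) ≠ 0 := by
  have key : (Matrix.of fun r j : Fin (m + 1) =>
        (((j : ℕ).factorial * (m + (r : ℕ) - (j : ℕ)).factorial : ℕ) : ℚ) /
          (((m + (r : ℕ) + 1).factorial : ℕ) : ℚ)) =
      Matrix.diagonal (fun r : Fin (m + 1) =>
        ((r : ℕ).factorial : ℚ) / ((m + (r : ℕ) + 1).factorial : ℚ)) *
      (Matrix.of fun r i : Fin (m + 1) =>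
        (ascPochhammer ℚ (i : ℕ)).eval (((r : ℕ) : ℚ) + 1)).submatrix id Fin.revPerm *
      Matrix.diagonal (fun j : Fin (m + 1) => ((j : ℕ).factorial : ℚ)) := by
    ext r j
    have hj : m + (r : ℕ) - j = r + (Fin.rev j : ℕ) := by
      rw [Fin.val_rev]
      omega
    rw [Matrix.mul_diagonal, Matrix.diagonal_mul]
    simp only [Matrix.of_apply, Matrix.submatrix_apply, id, Fin.revPerm_apply]
    rw [hj, Nat.cast_mul, factorial_add_eq_eval_ascPochhammer]
    ring
  rw [key, Matrix.det_mul, Matrix.det_mul, Matrix.det_diagonal, Matrix.det_diagonal,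
    Matrix.det_permute']
  refine mul_ne_zero (mul_ne_zero ?_ (mul_ne_zero ?_ (det_ascPochhammer_ne_zero m))) ?_
  · exact Finset.prod_ne_zero_iff.mpr fun r _ => by positivity
  · simp
  · exact Finset.prod_ne_zero_iff.mpr fun r _ => by positivity
end

section
/- Invertibility of the Kronecker-product coefficient matrix from the average-aggregation hardness reduction: for all m ≥ 0 and n ≥ 0, the square matrix L of size (m+1)(n+1), with rows indexed by pairs (j, q) ∈ {0,…,m} × {0,…,n} and columns indexed by pairs (r, i) ∈ {0,…,m} × {0,…,n}, and with entry L_{(j,q),(r,i)} = (j! · (m + r − j)! / (m + r + 1)!) · (1/(q + i + 1)), is invertible (has nonzero determinant) over ℚ. -/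
/-!
The matrix is the Kronecker product of `factorialMatrix m` and `hilbertMatrix n`, so its determinant
is a product of powers of theirs, and it suffices that both factors are nonsingular.

* `factorialMatrix`: dividing out `j!` from the rows and `r! / (m + r + 1)!` from the columns and
  reversing the order of the rows leaves `(r + k)! / r!`, where `k = m - j`. This is the rising
  factorial polynomial of degree `k` evaluated at `r + 1`. These polynomials are monic, one in each
  degree, so the determinant is, up to sign, a Vandermonde determinant at distinct nodes.
* `hilbertMatrix`: if `c` is in the kernel, clearing denominators in `∑ i, c i / (x + i + 1)` gives a
  polynomial of degree at most `n` vanishing at `x = 0, …, n`, hence zero; its value at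
  `x = -(k + 1)` is a nonzero multiple of `c k`.
-/

open Polynomial
open scoped Kronecker

/-- The first Kronecker factor. The natural subtraction is exact, since `j ≤ m`. -/
def factorialMatrix (m : ℕ) : Matrix (Fin (m + 1)) (Fin (m + 1)) ℚ :=
  Matrix.of fun j r => (((j : ℕ).factorial * (m + (r : ℕ) - (j : ℕ)).factorial : ℕ) : ℚ) /
    (((m + (r : ℕ) + 1).factorial : ℕ) : ℚ)

/-- The Hilbert matrix of size `n + 1`. -/
def hilbertMatrix (n : ℕ) : Matrix (Fin (n + 1)) (Fin (n + 1)) ℚ :=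
  Matrix.of fun q i => (1 : ℚ) / (((q : ℕ) + (i : ℕ) + 1 : ℕ) : ℚ)

theorem factorialMatrix_det_ne_zero (m : ℕ) : (factorialMatrix m).det ≠ 0 := by
  let P : Matrix (Fin (m + 1)) (Fin (m + 1)) ℚ :=
    Matrix.of fun r k => (ascPochhammer ℚ (k : ℕ)).eval (((r : ℕ) + 1 : ℕ) : ℚ)
  have hP : P.det ≠ 0 := by
    rw [← Matrix.det_eval_matrixOfPolynomials_eq_det_vandermonde
      (fun r : Fin (m + 1) => (((r : ℕ) + 1 : ℕ) : ℚ)) (fun k => ascPochhammer ℚ (k : ℕ))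
      (fun k => ascPochhammer_natDegree ℚ _) (fun k => monic_ascPochhammer ℚ _),
      Matrix.det_vandermonde_ne_zero_iff]
    intro a b hab
    have : (a : ℕ) + 1 = b + 1 := Nat.cast_injective hab
    exact Fin.ext (by lia)
  have hrev : (P.transpose.submatrix Fin.revPerm id).det ≠ 0 := by
    rw [Matrix.det_permute, Matrix.det_transpose]
    exact mul_ne_zero (by simp) hP
  have hA : factorialMatrix m = Matrix.of fun j r : Fin (m + 1) => ((j : ℕ).factorial : ℚ) *
      (Matrix.of fun j r : Fin (m + 1) =>
        (((r : ℕ).factorial : ℚ) / ((m + (r : ℕ) + 1).factorial : ℚ)) *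
          P.transpose.submatrix Fin.revPerm id j r) j r := by
    ext j r
    have hj := j.isLt
    have h := Nat.factorial_mul_ascFactorial (r : ℕ) (m - j)
    rw [show (r : ℕ) + (m - j) = m + r - j by lia] at h
    simp only [factorialMatrix, P, Matrix.of_apply, Matrix.submatrix_apply, Matrix.transpose_apply,
      Fin.revPerm_apply, Fin.val_rev, id, ascPochhammer_nat_eq_natCast_ascFactorial]
    rw [show m + 1 - ((j : ℕ) + 1) = m - j by lia, ← h]
    push_cast
    ring
  rw [hA, Matrix.det_mul_column, Matrix.det_mul_row]
  refine mul_ne_zero (Finset.prod_ne_zero_iff.mpr fun j _ => ?_)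
    (mul_ne_zero (Finset.prod_ne_zero_iff.mpr fun r _ => ?_) hrev)
  · positivity
  · positivity

theorem hilbertMatrix_det_ne_zero (n : ℕ) : (hilbertMatrix n).det ≠ 0 := by
  intro hdet
  obtain ⟨c, hc0, hc⟩ := Matrix.exists_mulVec_eq_zero_iff.mpr hdet
  apply hc0
  -- The numerator of `∑ i, c i / (x + i + 1)` over the common denominator.
  let p : ℚ[X] := ∑ i, C (c i) * ∏ l ∈ Finset.univ.erase i, (X + C ((l : ℕ) + 1 : ℚ))
  have hdeg : p.natDegree < Fintype.card (Fin (n + 1)) := by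
    rw [Fintype.card_fin, Nat.lt_succ_iff]
    refine natDegree_sum_le_of_forall_le _ _ fun i _ => ?_
    refine (natDegree_C_mul_le _ _).trans ?_
    rw [natDegree_prod_of_monic _ _ fun l _ => monic_X_add_C _]
    simp only [natDegree_X_add_C]
    simp
  have hroot (q : Fin (n + 1)) : p.eval ((q : ℕ) : ℚ) = 0 := by
    have hq := congrFun hc q
    simp only [Matrix.mulVec, dotProduct, hilbertMatrix, Matrix.of_apply, Pi.zero_apply] at hq
    have : p.eval ((q : ℕ) : ℚ) = (∏ l : Fin (n + 1), ((q : ℕ) + ((l : ℕ) + 1) : ℚ)) *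
        ∑ i : Fin (n + 1), 1 / (((q : ℕ) + (i : ℕ) + 1 : ℕ) : ℚ) * c i := by
      simp only [p, eval_finsetSum, eval_mul, eval_C, eval_prod, eval_add, eval_X, Finset.mul_sum]
      refine Finset.sum_congr rfl fun i _ => ?_
      rw [← Finset.mul_prod_erase _ _ (Finset.mem_univ i)]
      have : ((q : ℕ) + ((i : ℕ) + 1) : ℚ) ≠ 0 := by positivity
      push_cast
      rw [add_assoc]
      field_simp
    rw [this, hq, mul_zero]
  have hp : p = 0 := eq_zero_of_natDegree_lt_card_of_eval_eq_zero p
    (f := fun q : Fin (n + 1) => ((q : ℕ) : ℚ))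
    (fun a b hab => Fin.ext (Nat.cast_injective hab)) hroot hdeg
  funext k
  have hk : p.eval (-((k : ℕ) + 1 : ℚ)) =
      c k * ∏ l ∈ Finset.univ.erase k, (-((k : ℕ) + 1 : ℚ) + ((l : ℕ) + 1)) := by
    simp only [p, eval_finsetSum, eval_mul, eval_C, eval_prod, eval_add, eval_X]
    refine Finset.sum_eq_single k (fun i _ hik => ?_) (by simp)
    rw [Finset.prod_eq_zero (i := k) (by simp [hik.symm]) (by ring), mul_zero]
  rw [hp, eval_zero] at hk
  refine (mul_eq_zero.mp hk.symm).resolve_right (Finset.prod_ne_zero_iff.mpr fun l hl h => ?_)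
  have hlk : ((l : ℕ) : ℚ) = (k : ℕ) := by linarith
  exact (Finset.mem_erase.mp hl).1 (Fin.ext (by exact_mod_cast hlk))

/-- Invertibility of the Kronecker-product coefficient matrix from the
average-aggregation hardness reduction: the square matrix of size
`(m+1)(n+1)`, with rows indexed by pairs `(j, q)` and columns by pairs `(r, i)`,
and entries `(j! · (m + r − j)! / (m + r + 1)!) · (1 / (q + i + 1))`,
has nonzero determinant over `ℚ`. -/
theorem avg_reduction_kronecker_matrix_det_ne_zero (m n : ℕ) :
    Matrix.det
      (Matrix.of fun (jq : Fin (m + 1) × Fin (n + 1)) (ri : Fin (m + 1) × Fin (n + 1)) =>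
        ((((jq.1 : ℕ).factorial * (m + (ri.1 : ℕ) - (jq.1 : ℕ)).factorial : ℕ) : ℚ) /
            (((m + (ri.1 : ℕ) + 1).factorial : ℕ) : ℚ)) *
          ((1 : ℚ) / (((jq.2 : ℕ) + (ri.2 : ℕ) + 1 : ℕ) : ℚ))) ≠ 0 := by
  have h := Matrix.det_kronecker (factorialMatrix m) (hilbertMatrix n)
  have hne : (factorialMatrix m ⊗ₖ hilbertMatrix n).det ≠ 0 := by
    rw [h]
    exact mul_ne_zero (pow_ne_zero _ (factorialMatrix_det_ne_zero m))
      (pow_ne_zero _ (hilbertMatrix_det_ne_zero n))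
  exact hne
end

section
/- Quantile of the two-valued bag in the set-cover reduction: let a, b, n, t be natural numbers with 0 < a < b, n ≥ 1, and 0 ≤ t ≤ n, and let B be the multiset of real numbers consisting of b·a·n copies of 0 and t·b·(b−a) + 1 copies of 1. Then Qnt_{a/b}(B) = 1 if t = n, and Qnt_{a/b}(B) = 0 if t < n. -/
theorem sort_zeros_ones (p m : ℕ) :
    (Multiset.replicate p (0 : ℝ) + Multiset.replicate m (1 : ℝ)).sort (· ≤ ·) =
      List.replicate p 0 ++ List.replicate m 1 := by
  have h : (Multiset.replicate p (0 : ℝ) + Multiset.replicate m (1 : ℝ)) =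
      ((List.replicate p 0 ++ List.replicate m 1 : List ℝ) : Multiset ℝ) := by
    rw [← Multiset.coe_add, Multiset.coe_replicate, Multiset.coe_replicate]
  rw [h, Multiset.coe_sort]
  apply List.mergeSort_of_pairwise
  simp only [decide_eq_true_eq]
  rw [List.pairwise_append]
  refine ⟨List.pairwise_replicate.2 (Or.inr le_rfl), List.pairwise_replicate.2 (Or.inr le_rfl), ?_⟩
  intro x hx y hy
  rw [List.eq_of_mem_replicate hx, List.eq_of_mem_replicate hy]
  exact zero_le_one

theorem nthSmallest_zeros_ones (p m k : ℕ) (hk : k < p + m) :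
    nthSmallest (Multiset.replicate p (0 : ℝ) + Multiset.replicate m (1 : ℝ)) (k + 1) =
      if k < p then 0 else 1 := by
  unfold nthSmallest
  rw [sort_zeros_ones, Nat.add_sub_cancel]
  split_ifs with h
  · rw [List.getD_append _ _ _ _ (by simpa using h)]
    simp [h]
  · rw [List.getD_append_right _ _ _ _ (by simpa using h), List.length_replicate,
      List.getD_replicate _ (by omega)]

/-- When `q·|B|` is a natural number `k` plus a fractional part in `(0, 1)`, both indices in the
quantile are `k + 1`. -/
theorem qnt_eq_nthSmallest (q r : ℝ) (B : Multiset ℝ) (k : ℕ)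
    (h : q * (Multiset.card B : ℝ) = k + r) (h0 : 0 < r) (h1 : r < 1) :
    qnt q B = nthSmallest B (k + 1) := by
  have hc : ⌈(k : ℝ) + r⌉₊ = k + 1 := by
    rw [Nat.ceil_eq_iff (by omega)]
    push_cast
    constructor <;> simp <;> linarith
  have hf : ⌊(k : ℝ) + r + 1⌋₊ = k + 1 := by
    rw [Nat.floor_eq_iff (by positivity)]
    push_cast
    constructor <;> linarith
  unfold qnt
  rw [h, hc, hf]
  ring

/-- Quantile of the two-valued bag in the set-cover reduction: for the multiset
consisting of `b·a·n` copies of `0` and `t·b·(b−a) + 1` copies of `1`, the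
`(a/b)`-quantile is `1` if `t = n` and `0` if `t < n`. -/
theorem qnt_set_cover_bag (a b n t : ℕ) (ha : 0 < a) (hab : a < b) (hn : 1 ≤ n)
    (htn : t ≤ n) :
    (t = n →
        qnt ((a : ℝ) / (b : ℝ))
          (Multiset.replicate (b * a * n) (0 : ℝ) +
            Multiset.replicate (t * b * (b - a) + 1) (1 : ℝ)) = 1) ∧
      (t < n →
        qnt ((a : ℝ) / (b : ℝ))
          (Multiset.replicate (b * a * n) (0 : ℝ) +
            Multiset.replicate (t * b * (b - a) + 1) (1 : ℝ)) = 0) := by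
  have hb : (0 : ℝ) < b := by exact_mod_cast ha.trans hab
  have key : qnt ((a : ℝ) / (b : ℝ))
      (Multiset.replicate (b * a * n) (0 : ℝ) +
        Multiset.replicate (t * b * (b - a) + 1) (1 : ℝ)) =
      nthSmallest (Multiset.replicate (b * a * n) (0 : ℝ) +
        Multiset.replicate (t * b * (b - a) + 1) (1 : ℝ)) (a * (a * n + t * (b - a)) + 1) := by
    apply qnt_eq_nthSmallest _ ((a : ℝ) / b)
    · simp only [Multiset.card_add, Multiset.card_replicate]
      push_cast
      field_simp
      ring
    · positivity
    · rw [div_lt_one hb]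
      exact_mod_cast hab
  rw [key]
  obtain ⟨d, rfl⟩ := Nat.exists_eq_add_of_lt hab
  obtain ⟨s, rfl⟩ := Nat.exists_eq_add_of_le htn
  have hd : a + d + 1 - a = d + 1 := by omega
  rw [hd]
  have hK : (a + d + 1) * a * (t + s) =
      a * (a * (t + s) + t * (d + 1)) + a * s * (d + 1) := by ring
  rw [nthSmallest_zeros_ones _ _ _ (by rw [hK]; omega)]
  constructor
  · intro hts
    obtain rfl : s = 0 := by omega
    rw [if_neg (by rw [hK]; simp)]
  · intro hts
    have hs : 0 < s := by omega
    have hpos : 0 < a * s * (d + 1) := by positivity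
    rw [if_pos (by omega)]
end
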